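/- If ε : ℕ → ZMod 2 satisfies the Adem constraints and ε(2) = 0, then for every odd natural number r ≥ 3 one has ε(3)·ε(r) = ε(2r+1). -/

import Mathlib

/-!
Let `F = ∑ ε(i) Xⁱ` over `𝔽₂`, so that `E ε s d` is the coefficient of `X ^ d` in `F ^ s`. As
`ε 0 = 0` and `ε 1 = 1`, it vanishes for `d < s` and is `1` for `d = s`, which leaves only the
indices `i` with `r ≤ 2i < r + s` in the Adem constraint with parameters `s` and `r`.

* For `s = 2` and `r = 2i - 1` the only surviving term is `(i - 3) ε(i)`. If `ε 2 = 0`, the left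
  side is zero, and so `ε` vanishes at every even `i ≥ 4`.
* For `s = 3` and with `4r` in place of `r` the left side is `ε(3) ε(r)`, because
  `F ^ 4 = F(X ^ 4)`. On the right side the term at `2r` carries the factor `ε(2r) = 0`, and the
  term at `2r + 1` is `C(2r - 3, 2) ε(2r + 1)`, where the binomial coefficient has the parity of
  `r`.
-/

/-- `E ε s d` is the sum over all `s`-tuples of naturals summing to `d` of the
products of the values of `ε`, in `ZMod 2`. -/
def E (ε : ℕ → ZMod 2) (s d : ℕ) : ZMod 2 :=
  ∑ f ∈ Finset.Nat.antidiagonalTuple s d, ∏ j, ε (f j)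

/-- `ε` satisfies the Adem constraints encoding the Adem relations among the
Dyer-Lashof operations on `F₂[u]` with `Q^{2r} u = ε r • u^{r+1}`. -/
def AdemConstraints (ε : ℕ → ZMod 2) : Prop :=
  ε 0 = 0 ∧ ε 1 = 1 ∧ ∀ s r : ℕ, r > 2 * s →
    ε s * E ε (s + 1) r =
      ∑ i ∈ (Finset.Icc (s + 1) (r - s - 1)).filter (fun i => r ≤ 2 * i),
        ((Nat.choose (i - s - 1) (2 * i - r) : ZMod 2) * ε i * E ε (i + 1) (r + s - i))

section PowerSeriesCoefficients

open PowerSeries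

variable {R : Type*}

lemma coeff_mk_pow [CommSemiring R] (a : ℕ → R) (s d : ℕ) :
    coeff d (mk a ^ s) = ∑ f ∈ Finset.Nat.antidiagonalTuple s d, ∏ j, a (f j) := by
  have h := coeff_prod (fun _ : Fin s ↦ mk a) d Finset.univ
  simp only [Finset.prod_const, Finset.card_univ, Fintype.card_fin, coeff_mk] at h
  rw [h, ← Finset.piAntidiag_univ_fin_eq_antidiagonalTuple]
  exact Finset.sum_equiv Finsupp.equivFunOnFinite (by simp [Finset.mem_finsuppAntidiag]) (by simp)

lemma coeff_pow_self_of_constantCoeff_eq_zero [CommSemiring R] {φ : R⟦X⟧}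
    (hφ : constantCoeff φ = 0) (n : ℕ) : coeff n (φ ^ n) = coeff 1 φ ^ n := by
  obtain ⟨ψ, rfl⟩ := X_dvd_iff.2 hφ
  have h : coeff 1 (X * ψ) = coeff 0 ψ := coeff_succ_X_mul 0 ψ
  rw [h, mul_pow, coeff_X_pow_mul', if_pos le_rfl, Nat.sub_self, coeff_zero_eq_constantCoeff,
    map_pow]

lemma coeff_expChar_pow_mul_pow [CommRing R] (p : ℕ) [ExpChar R p] (φ : R⟦X⟧) (n d : ℕ) :
    coeff (p ^ n * d) (φ ^ p ^ n) = coeff d φ ^ p ^ n := by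
  have hp : p ≠ 0 := expChar_ne_zero R p
  have h : map (iterateFrobenius R p n) (expand (p ^ n) (pow_ne_zero n hp) φ) = φ ^ p ^ n :=
    MvPowerSeries.map_iterateFrobenius_expand p hp φ n
  rw [← h, coeff_map, coeff_expand_mul, iterateFrobenius_def]

end PowerSeriesCoefficients

lemma natCast_choose_two_zmod_two (n : ℕ) : (n.choose 2 : ZMod 2) = (n / 2 : ℕ) := by
  have lucas := Choose.choose_modEq_choose_mod_mul_choose_div_nat (p := 2) (n := n) (k := 2)
  simpa using (ZMod.natCast_eq_natCast_iff _ _ 2).2 lucas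

section E

variable (ε : ℕ → ZMod 2)

lemma E_eq_coeff_mk_pow (s d : ℕ) : E ε s d = PowerSeries.coeff d (PowerSeries.mk ε ^ s) :=
  (coeff_mk_pow ε s d).symm

lemma E_two_pow (n d : ℕ) : E ε (2 ^ n) (2 ^ n * d) = ε d := by
  rw [E_eq_coeff_mk_pow, coeff_expChar_pow_mul_pow 2, PowerSeries.coeff_mk, ZMod.pow_card_pow]

variable {ε}

lemma E_eq_zero_of_lt (h0 : ε 0 = 0) {s d : ℕ} (hd : d < s) : E ε s d = 0 := by
  rw [E_eq_coeff_mk_pow]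
  exact PowerSeries.coeff_of_lt_order d <| (Nat.cast_lt.2 hd).trans_le <|
    PowerSeries.le_order_pow_of_constantCoeff_eq_zero s (by simpa using h0)

lemma E_self (h0 : ε 0 = 0) (s : ℕ) : E ε s s = ε 1 ^ s := by
  rw [E_eq_coeff_mk_pow, coeff_pow_self_of_constantCoeff_eq_zero (by simpa using h0),
    PowerSeries.coeff_mk]

end E

namespace AdemConstraints

variable {ε : ℕ → ZMod 2}

lemma E_self_eq_one (hε : AdemConstraints ε) (s : ℕ) : E ε s s = 1 := by
  rw [E_self hε.1, hε.2.1, one_pow]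

lemma eps_mul_E_eq_sum_Ico (hε : AdemConstraints ε) {s r : ℕ} (hr : 2 * s < r) :
    ε s * E ε (s + 1) r = ∑ i ∈ Finset.Ico ((r + 1) / 2) ((r + s + 1) / 2),
      ((i - s - 1).choose (2 * i - r) : ZMod 2) * ε i * E ε (i + 1) (r + s - i) := by
  rw [hε.2.2 s r hr]
  refine Finset.sum_congr_of_eq_on_inter ?E_vanishes ?choose_vanishes fun _ _ _ ↦ rfl
  case E_vanishes =>
    intro i hi hi'
    simp only [Finset.mem_filter, Finset.mem_Icc, Finset.mem_Ico] at hi hi'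
    rw [E_eq_zero_of_lt hε.1 (by omega), mul_zero]
  case choose_vanishes =>
    intro i hi hi'
    simp only [Finset.mem_filter, Finset.mem_Icc, Finset.mem_Ico] at hi hi'
    rw [Nat.choose_eq_zero_of_lt (by omega), Nat.cast_zero, zero_mul, zero_mul]

lemma eps_two_mul_E (hε : AdemConstraints ε) {i : ℕ} (hi : 3 ≤ i) :
    ε 2 * E ε 3 (2 * i - 1) = (i + 1) * ε i := by
  have coeff_eq : ((i - 3 : ℕ) : ZMod 2) = i + 1 := by
    rw [Nat.cast_sub hi, CharTwo.sub_eq_add, show ((3 : ℕ) : ZMod 2) = 1 from rfl]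
  calc
    _ = ∑ j ∈ Finset.Ico i (i + 1), ((j - 2 - 1).choose (2 * j - (2 * i - 1)) : ZMod 2) * ε j *
          E ε (j + 1) (2 * i - 1 + 2 - j) := by
      rw [hε.eps_mul_E_eq_sum_Ico (by omega)]
      congr! 2 <;> omega
    _ = ((i - 3).choose 1 : ZMod 2) * ε i * E ε (i + 1) (i + 1) := by
      rw [Nat.Ico_succ_singleton, Finset.sum_singleton, Nat.sub_sub,
        show 2 * i - (2 * i - 1) = 1 by omega, show 2 * i - 1 + 2 - i = i + 1 by omega]
    _ = (i + 1) * ε i := by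
      rw [hε.E_self_eq_one, mul_one, Nat.choose_one_right, coeff_eq]

lemma eps_three_mul_eps (hε : AdemConstraints ε) {r : ℕ} (hr : 2 ≤ r) :
    ε 3 * ε r = ε (2 * r) * E ε (2 * r + 1) (2 * r + 3) + r * ε (2 * r + 1) := by
  have choose_eq : ((2 * r - 3).choose 2 : ZMod 2) = r := by
    rw [natCast_choose_two_zmod_two, show (2 * r - 3) / 2 = r - 2 by omega, Nat.cast_sub hr,
      ZMod.natCast_self, sub_zero]
  calc
    _ = ε 3 * E ε 4 (4 * r) := by rw [show E ε 4 (4 * r) = ε r from E_two_pow ε 2 r]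
    _ = ∑ i ∈ Finset.Ico (2 * r) (2 * r + 2), ((i - 3 - 1).choose (2 * i - 4 * r) : ZMod 2) *
          ε i * E ε (i + 1) (4 * r + 3 - i) := by
      rw [hε.eps_mul_E_eq_sum_Ico (by omega)]
      congr! 2 <;> omega
    _ = ((2 * r - 4).choose 0 : ZMod 2) * ε (2 * r) * E ε (2 * r + 1) (2 * r + 3) +
          ((2 * r - 3).choose 2 : ZMod 2) * ε (2 * r + 1) * E ε (2 * r + 2) (2 * r + 2) := by
      rw [Finset.sum_Ico_succ_top (by omega), Nat.Ico_succ_singleton, Finset.sum_singleton,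
        show 2 * r - 3 - 1 = 2 * r - 4 by omega, show 2 * (2 * r) - 4 * r = 0 by omega,
        show 4 * r + 3 - 2 * r = 2 * r + 3 by omega, show 2 * r + 1 - 3 - 1 = 2 * r - 3 by omega,
        show 2 * (2 * r + 1) - 4 * r = 2 by omega,
        show 4 * r + 3 - (2 * r + 1) = 2 * r + 2 by omega]
    _ = ε (2 * r) * E ε (2 * r + 1) (2 * r + 3) + r * ε (2 * r + 1) := by
      rw [hε.E_self_eq_one, choose_eq, Nat.choose_zero_right, Nat.cast_one, one_mul, mul_one]

lemma eps_eq_zero_of_even (hε : AdemConstraints ε) (h2 : ε 2 = 0) {i : ℕ} (hi : 4 ≤ i)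
    (hi_even : Even i) : ε i = 0 := by
  simpa [h2, hi_even.natCast_zmod_two] using (hε.eps_two_mul_E (by omega : 3 ≤ i)).symm

end AdemConstraints

theorem stmt_2 (ε : ℕ → ZMod 2) (hε : AdemConstraints ε) (h2 : ε 2 = 0) :
    ∀ r : ℕ, 3 ≤ r → Odd r → ε 3 * ε r = ε (2 * r + 1) := by
  intro r hr hodd
  have even_term : ε (2 * r) = 0 := hε.eps_eq_zero_of_even h2 (by omega) (even_two_mul r)
  have odd_coeff : (r : ZMod 2) = 1 := ZMod.natCast_eq_one_iff_odd.2 hodd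
  rw [hε.eps_three_mul_eps (by omega), even_term, odd_coeff, zero_mul, zero_add, one_mul]
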